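/- Let φ solve the wave equation -□φ = F on ℝ^{1+2} (□ = -∂_t² + Δ). Then for all t > 0 and |x| ≤ 3t, Σ |∂∂φ(t,x)| ≤ C ( (1/⟨t-|x|⟩) Σ_Γ |∂Γφ(t,x)| + (1/⟨t-|x|⟩) |∂φ(t,x)| + (t/⟨t-|x|⟩) |F(t,x)| ), where Γ ranges over the vector fields {∂_α, Ω, L₁, L₂}, ∂∂ ranges over second derivatives, and ⟨s⟩ = sqrt(1+s²). -/

import Mathlib

/-- Partial derivative in `t` of a function `u(t, x₁, x₂)`. -/
noncomputable def pdt (u : ℝ → ℝ → ℝ → ℝ) : ℝ → ℝ → ℝ → ℝ :=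
  fun t x y => deriv (fun s => u s x y) t

/-- Partial derivative in `x₁`. -/
noncomputable def pd1 (u : ℝ → ℝ → ℝ → ℝ) : ℝ → ℝ → ℝ → ℝ :=
  fun t x y => deriv (fun s => u t s y) x

/-- Partial derivative in `x₂`. -/
noncomputable def pd2 (u : ℝ → ℝ → ℝ → ℝ) : ℝ → ℝ → ℝ → ℝ :=
  fun t x y => deriv (fun s => u t x s) y

/-- Lorentz boost `L₁ = x₁ ∂_t + t ∂_{x₁}`. -/
noncomputable def Lb1 (u : ℝ → ℝ → ℝ → ℝ) : ℝ → ℝ → ℝ → ℝ :=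
  fun t x y => x * pdt u t x y + t * pd1 u t x y

/-- Lorentz boost `L₂ = x₂ ∂_t + t ∂_{x₂}`. -/
noncomputable def Lb2 (u : ℝ → ℝ → ℝ → ℝ) : ℝ → ℝ → ℝ → ℝ :=
  fun t x y => y * pdt u t x y + t * pd2 u t x y

/-- Rotation `Ω = x₁ ∂_{x₂} - x₂ ∂_{x₁}`. -/
noncomputable def rotOp (u : ℝ → ℝ → ℝ → ℝ) : ℝ → ℝ → ℝ → ℝ :=
  fun t x y => x * pd2 u t x y - y * pd1 u t x y

/-- Japanese bracket `⟨s⟩ = sqrt(1+s²)`. -/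
noncomputable def jap (s : ℝ) : ℝ := Real.sqrt (1 + s ^ 2)

/-- Sum of absolute values of the three first partial derivatives of `u` at a point. -/
noncomputable def sum1 (u : ℝ → ℝ → ℝ → ℝ) (t x y : ℝ) : ℝ :=
  |pdt u t x y| + |pd1 u t x y| + |pd2 u t x y|

/-!
Write `r = |x|` and `L_i = x_i ∂_t + t ∂_i`. Multiplying the wave equation by `t²` and trading
every `t ∂_i` for `L_i - x_i ∂_t` gives
`(t² - r²) ∂_t²φ = t² F + ∑ i, (t (x_i ∂_i∂_tφ + t ∂_i²φ) - x_i (x_i ∂_t²φ + t ∂_t∂_iφ))`,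
where the inner brackets are `∂_i L_i φ` and `∂_t L_i φ` up to first derivatives of `φ`. Since `t`
and `|x_i|` are at most `t + r`, dividing by `t + r` bounds `|t - r| |∂_t²φ|`. The remaining second
derivatives follow because `t ∂_i` agrees with `-x_i ∂_t` up to a boost, and `|x_i| / t` is bounded
in the cone. Finally `⟨t - r⟩ ≤ 1 + |t - r|`, and the summand `1` is harmless because the
translations are among the `Γ`.
-/

open Function

section PartialDerivatives

variable {u φ : ℝ → ℝ → ℝ → ℝ} {t x y : ℝ}

theorem hasDerivAt_pdt_fderiv (hu : DifferentiableAt ℝ ↿u (t, x, y)) :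
    HasDerivAt (fun s => u s x y) (fderiv ℝ ↿u (t, x, y) (1, 0, 0)) t :=
  hu.hasFDerivAt.comp_hasDerivAt (f := fun s => (s, x, y)) t
    ((hasDerivAt_id t).prodMk ((hasDerivAt_const t x).prodMk (hasDerivAt_const t y)))

theorem hasDerivAt_pd1_fderiv (hu : DifferentiableAt ℝ ↿u (t, x, y)) :
    HasDerivAt (fun s => u t s y) (fderiv ℝ ↿u (t, x, y) (0, 1, 0)) x :=
  hu.hasFDerivAt.comp_hasDerivAt (f := fun s => (t, s, y)) x
    ((hasDerivAt_const x t).prodMk ((hasDerivAt_id x).prodMk (hasDerivAt_const x y)))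

theorem hasDerivAt_pd2_fderiv (hu : DifferentiableAt ℝ ↿u (t, x, y)) :
    HasDerivAt (fun s => u t x s) (fderiv ℝ ↿u (t, x, y) (0, 0, 1)) y :=
  hu.hasFDerivAt.comp_hasDerivAt (f := fun s => (t, x, s)) y
    ((hasDerivAt_const y t).prodMk ((hasDerivAt_const y x).prodMk (hasDerivAt_id y)))

theorem pdt_eq_fderiv (hu : DifferentiableAt ℝ ↿u (t, x, y)) :
    pdt u t x y = fderiv ℝ ↿u (t, x, y) (1, 0, 0) :=
  (hasDerivAt_pdt_fderiv hu).deriv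

theorem pd1_eq_fderiv (hu : DifferentiableAt ℝ ↿u (t, x, y)) :
    pd1 u t x y = fderiv ℝ ↿u (t, x, y) (0, 1, 0) :=
  (hasDerivAt_pd1_fderiv hu).deriv

theorem pd2_eq_fderiv (hu : DifferentiableAt ℝ ↿u (t, x, y)) :
    pd2 u t x y = fderiv ℝ ↿u (t, x, y) (0, 0, 1) :=
  (hasDerivAt_pd2_fderiv hu).deriv

theorem hasDerivAt_pdt (hu : DifferentiableAt ℝ ↿u (t, x, y)) :
    HasDerivAt (fun s => u s x y) (pdt u t x y) t :=
  (hasDerivAt_pdt_fderiv hu).differentiableAt.hasDerivAt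

theorem hasDerivAt_pd1 (hu : DifferentiableAt ℝ ↿u (t, x, y)) :
    HasDerivAt (fun s => u t s y) (pd1 u t x y) x :=
  (hasDerivAt_pd1_fderiv hu).differentiableAt.hasDerivAt

theorem hasDerivAt_pd2 (hu : DifferentiableAt ℝ ↿u (t, x, y)) :
    HasDerivAt (fun s => u t x s) (pd2 u t x y) y :=
  (hasDerivAt_pd2_fderiv hu).differentiableAt.hasDerivAt

theorem hasFDerivAt_of_eq_fderiv_apply {E F : Type*} [NormedAddCommGroup E] [NormedSpace ℝ E]
    [NormedAddCommGroup F] [NormedSpace ℝ F] {f g : E → F} {p : E} (hf : ContDiffAt ℝ 2 f p) (v : E)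
    (hg : ∀ q, DifferentiableAt ℝ f q → g q = fderiv ℝ f q v) :
    HasFDerivAt g ((fderiv ℝ (fderiv ℝ f) p).flip v) p := by
  have hf' : HasFDerivAt (fderiv ℝ f) (fderiv ℝ (fderiv ℝ f) p) p :=
    ((hf.fderiv_right (m := 1) le_rfl).differentiableAt one_ne_zero).hasFDerivAt
  have hfv : HasFDerivAt (fun q => fderiv ℝ f q v) ((fderiv ℝ (fderiv ℝ f) p).flip v) p := by
    simpa using hf'.clm_apply (hasFDerivAt_const v p)
  refine hfv.congr_of_eventuallyEq ?_
  filter_upwards [hf.eventually (by simp)] with q hq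
  exact hg q (hq.differentiableAt two_ne_zero)

theorem hasFDerivAt_pdt (hφ : ContDiffAt ℝ 2 ↿φ (t, x, y)) :
    HasFDerivAt ↿(pdt φ) ((fderiv ℝ (fderiv ℝ ↿φ) (t, x, y)).flip (1, 0, 0)) (t, x, y) :=
  hasFDerivAt_of_eq_fderiv_apply hφ _ fun _ => pdt_eq_fderiv

theorem hasFDerivAt_pd1 (hφ : ContDiffAt ℝ 2 ↿φ (t, x, y)) :
    HasFDerivAt ↿(pd1 φ) ((fderiv ℝ (fderiv ℝ ↿φ) (t, x, y)).flip (0, 1, 0)) (t, x, y) :=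
  hasFDerivAt_of_eq_fderiv_apply hφ _ fun _ => pd1_eq_fderiv

theorem hasFDerivAt_pd2 (hφ : ContDiffAt ℝ 2 ↿φ (t, x, y)) :
    HasFDerivAt ↿(pd2 φ) ((fderiv ℝ (fderiv ℝ ↿φ) (t, x, y)).flip (0, 0, 1)) (t, x, y) :=
  hasFDerivAt_of_eq_fderiv_apply hφ _ fun _ => pd2_eq_fderiv

theorem pdt_pd1_comm (hφ : ContDiffAt ℝ 2 ↿φ (t, x, y)) :
    pdt (pd1 φ) t x y = pd1 (pdt φ) t x y := by
  have hsymm : IsSymmSndFDerivAt ℝ ↿φ (t, x, y) := hφ.isSymmSndFDerivAt (by simp)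
  rw [pdt_eq_fderiv (hasFDerivAt_pd1 hφ).differentiableAt, (hasFDerivAt_pd1 hφ).fderiv,
    pd1_eq_fderiv (hasFDerivAt_pdt hφ).differentiableAt, (hasFDerivAt_pdt hφ).fderiv]
  exact hsymm _ _

theorem pdt_pd2_comm (hφ : ContDiffAt ℝ 2 ↿φ (t, x, y)) :
    pdt (pd2 φ) t x y = pd2 (pdt φ) t x y := by
  have hsymm : IsSymmSndFDerivAt ℝ ↿φ (t, x, y) := hφ.isSymmSndFDerivAt (by simp)
  rw [pdt_eq_fderiv (hasFDerivAt_pd2 hφ).differentiableAt, (hasFDerivAt_pd2 hφ).fderiv,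
    pd2_eq_fderiv (hasFDerivAt_pdt hφ).differentiableAt, (hasFDerivAt_pdt hφ).fderiv]
  exact hsymm _ _

end PartialDerivatives

section Boosts

variable {φ : ℝ → ℝ → ℝ → ℝ} {t x y : ℝ}

theorem pdt_Lb1 (hφ : ContDiffAt ℝ 2 ↿φ (t, x, y)) :
    pdt (Lb1 φ) t x y = pd1 φ t x y + (x * pdt (pdt φ) t x y + t * pdt (pd1 φ) t x y) :=
  have h := ((hasDerivAt_pdt (hasFDerivAt_pdt hφ).differentiableAt).const_mul x).add
    ((hasDerivAt_id t).mul (hasDerivAt_pdt (hasFDerivAt_pd1 hφ).differentiableAt))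
  HasDerivAt.deriv (h.congr_deriv (by simp only [id]; ring))

theorem pd1_Lb1 (hφ : ContDiffAt ℝ 2 ↿φ (t, x, y)) :
    pd1 (Lb1 φ) t x y = pdt φ t x y + (x * pd1 (pdt φ) t x y + t * pd1 (pd1 φ) t x y) :=
  have h := ((hasDerivAt_id x).mul (hasDerivAt_pd1 (hasFDerivAt_pdt hφ).differentiableAt)).add
    ((hasDerivAt_pd1 (hasFDerivAt_pd1 hφ).differentiableAt).const_mul t)
  HasDerivAt.deriv (h.congr_deriv (by simp only [id]; ring))

theorem pd2_Lb1 (hφ : ContDiffAt ℝ 2 ↿φ (t, x, y)) :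
    pd2 (Lb1 φ) t x y = x * pd2 (pdt φ) t x y + t * pd2 (pd1 φ) t x y :=
  (((hasDerivAt_pd2 (hasFDerivAt_pdt hφ).differentiableAt).const_mul x).add
    ((hasDerivAt_pd2 (hasFDerivAt_pd1 hφ).differentiableAt).const_mul t)).deriv

theorem pdt_Lb2 (hφ : ContDiffAt ℝ 2 ↿φ (t, x, y)) :
    pdt (Lb2 φ) t x y = pd2 φ t x y + (y * pdt (pdt φ) t x y + t * pdt (pd2 φ) t x y) :=
  have h := ((hasDerivAt_pdt (hasFDerivAt_pdt hφ).differentiableAt).const_mul y).add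
    ((hasDerivAt_id t).mul (hasDerivAt_pdt (hasFDerivAt_pd2 hφ).differentiableAt))
  HasDerivAt.deriv (h.congr_deriv (by simp only [id]; ring))

theorem pd1_Lb2 (hφ : ContDiffAt ℝ 2 ↿φ (t, x, y)) :
    pd1 (Lb2 φ) t x y = y * pd1 (pdt φ) t x y + t * pd1 (pd2 φ) t x y :=
  (((hasDerivAt_pd1 (hasFDerivAt_pdt hφ).differentiableAt).const_mul y).add
    ((hasDerivAt_pd1 (hasFDerivAt_pd2 hφ).differentiableAt).const_mul t)).deriv

theorem pd2_Lb2 (hφ : ContDiffAt ℝ 2 ↿φ (t, x, y)) :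
    pd2 (Lb2 φ) t x y = pdt φ t x y + (y * pd2 (pdt φ) t x y + t * pd2 (pd2 φ) t x y) :=
  have h := ((hasDerivAt_id y).mul (hasDerivAt_pd2 (hasFDerivAt_pdt hφ).differentiableAt)).add
    ((hasDerivAt_pd2 (hasFDerivAt_pd2 hφ).differentiableAt).const_mul t)
  HasDerivAt.deriv (h.congr_deriv (by simp only [id]; ring))

end Boosts

section HessianAlgebra

-- Here `a`, `b j` and `d j i` play the roles of `∂_t²φ`, `∂_j∂_tφ` and `∂_j∂_iφ`.

variable {ι : Type*} [Fintype ι] {t κ : ℝ} {x : ι → ℝ}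

theorem sq_sub_sum_sq_mul_eq_wave_add_boosts (t a : ℝ) (x b : ι → ℝ) (d : ι → ι → ℝ) :
    (t ^ 2 - ∑ i, x i ^ 2) * a = t ^ 2 * (a - ∑ i, d i i) +
      ∑ i, (t * (x i * b i + t * d i i) - x i * (x i * a + t * b i)) := by
  have hsum : ∑ i, (t * (x i * b i + t * d i i) - x i * (x i * a + t * b i)) =
      t ^ 2 * ∑ i, d i i - (∑ i, x i ^ 2) * a := by
    rw [Finset.mul_sum, Finset.sum_mul, ← Finset.sum_sub_distrib]
    exact Finset.sum_congr rfl fun i _ => by ring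
  rw [hsum]
  ring

theorem abs_le_sqrt_sum_sq (x : ι → ℝ) (i : ι) : |x i| ≤ √(∑ j, x j ^ 2) :=
  Real.abs_le_sqrt
    (Finset.single_le_sum (f := fun j => x j ^ 2) (fun j _ => sq_nonneg (x j)) (Finset.mem_univ i))

theorem abs_sub_mul_abs_le_wave_add_diag_boosts (ht : 0 < t) (a : ℝ) (x b : ι → ℝ) (d : ι → ι → ℝ) :
    |t - √(∑ i, x i ^ 2)| * |a| ≤
      t * |a - ∑ i, d i i| + ∑ i, (|x i * b i + t * d i i| + |x i * a + t * b i|) := by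
  set r := √(∑ i, x i ^ 2) with hr
  have hr0 : 0 ≤ r := Real.sqrt_nonneg _
  have hfactor : (t + r) * ((t - r) * a) = t ^ 2 * (a - ∑ i, d i i) +
      ∑ i, (t * (x i * b i + t * d i i) - x i * (x i * a + t * b i)) := by
    rw [← sq_sub_sum_sq_mul_eq_wave_add_boosts,
      ← Real.sq_sqrt (Finset.sum_nonneg fun i _ => sq_nonneg (x i)), ← hr]
    ring
  have hwave : |t ^ 2 * (a - ∑ i, d i i)| ≤ (t + r) * (t * |a - ∑ i, d i i|) := by
    rw [abs_mul, abs_of_nonneg (sq_nonneg t), pow_two, mul_assoc]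
    gcongr
    linarith
  have hboost (i : ι) : |t * (x i * b i + t * d i i) - x i * (x i * a + t * b i)| ≤
      (t + r) * (|x i * b i + t * d i i| + |x i * a + t * b i|) := by
    refine (abs_sub _ _).trans ?_
    rw [abs_mul, abs_mul, abs_of_pos ht, mul_add]
    gcongr
    · linarith
    · linarith [abs_le_sqrt_sum_sq x i]
  refine le_of_mul_le_mul_left (a := t + r) ?_ (by linarith)
  calc (t + r) * (|t - r| * |a|) = |(t + r) * ((t - r) * a)| := by
        rw [abs_mul, abs_mul, abs_of_pos (by linarith : 0 < t + r)]
    _ ≤ (t + r) * (t * |a - ∑ i, d i i|) +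
          ∑ i, (t + r) * (|x i * b i + t * d i i| + |x i * a + t * b i|) := by
        rw [hfactor]
        exact (abs_add_le _ _).trans (add_le_add hwave
          ((Finset.abs_sum_le_sum_abs _ _).trans (Finset.sum_le_sum fun i _ => hboost i)))
    _ = _ := by rw [← Finset.mul_sum, mul_add]

theorem abs_sub_mul_abs_le_wave_add_boosts (ht : 0 < t) (a : ℝ) (x b : ι → ℝ) (d : ι → ι → ℝ) :
    |t - √(∑ i, x i ^ 2)| * |a| ≤ t * |a - ∑ i, d i i| + ∑ i, |x i * a + t * b i| +
      ∑ j, ∑ i, |x i * b j + t * d j i| := by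
  have hdiag : ∑ i, |x i * b i + t * d i i| ≤ ∑ j, ∑ i, |x i * b j + t * d j i| :=
    Finset.sum_le_sum fun j _ => Finset.single_le_sum (f := fun i => |x i * b j + t * d j i|)
      (fun _ _ => abs_nonneg _) (Finset.mem_univ j)
  have h := abs_sub_mul_abs_le_wave_add_diag_boosts ht a x b d
  rw [Finset.sum_add_distrib] at h
  linarith

theorem mul_abs_le_boost_add {s lam x p q : ℝ} (ht : 0 < t) (hs0 : 0 ≤ s) (hs : s ≤ lam * t)
    (hx : |x| ≤ κ * t) : s * |q| ≤ lam * |x * p + t * q| + κ * (s * |p|) := by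
  have hq : t * |q| ≤ |x * p + t * q| + |x| * |p| := by
    calc t * |q| = |(x * p + t * q) - x * p| := by rw [add_sub_cancel_left, abs_mul, abs_of_pos ht]
      _ ≤ |x * p + t * q| + |x| * |p| := by rw [← abs_mul]; exact abs_sub _ _
  refine le_of_mul_le_mul_left (a := t) ?_ ht
  calc t * (s * |q|) = s * (t * |q|) := by ring
    _ ≤ s * (|x * p + t * q| + |x| * |p|) := by gcongr
    _ = s * |x * p + t * q| + |x| * (s * |p|) := by ring
    _ ≤ lam * t * |x * p + t * q| + κ * t * (s * |p|) := by gcongr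
    _ = t * (lam * |x * p + t * q| + κ * (s * |p|)) := by ring

theorem abs_sub_mul_sum_abs_le_boosts_add (ht : 0 < t) (hcone : √(∑ i, x i ^ 2) ≤ κ * t) (p : ℝ)
    (q : ι → ℝ) :
    |t - √(∑ i, x i ^ 2)| * ∑ i, |q i| ≤ (1 + κ) * ∑ i, |x i * p + t * q i| +
      Fintype.card ι * κ * (|t - √(∑ i, x i ^ 2)| * |p|) := by
  have hs : |t - √(∑ i, x i ^ 2)| ≤ (1 + κ) * t := by
    rw [abs_le]
    constructor <;> linarith [Real.sqrt_nonneg (∑ i, x i ^ 2)]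
  rw [Finset.mul_sum]
  refine (Finset.sum_le_sum fun i _ => mul_abs_le_boost_add (p := p) ht (abs_nonneg _) hs
    ((abs_le_sqrt_sum_sq x i).trans hcone)).trans_eq ?_
  rw [Finset.sum_add_distrib, ← Finset.mul_sum, Finset.sum_const, Finset.card_univ, nsmul_eq_mul,
    mul_assoc]

theorem abs_sub_mul_sum_sum_abs_le_boosts_add (ht : 0 < t) (hcone : √(∑ i, x i ^ 2) ≤ κ * t)
    (b : ι → ℝ) (d : ι → ι → ℝ) :
    |t - √(∑ i, x i ^ 2)| * ∑ j, ∑ i, |d j i| ≤ (1 + κ) * ∑ j, ∑ i, |x i * b j + t * d j i| +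
      Fintype.card ι * κ * (|t - √(∑ i, x i ^ 2)| * ∑ j, |b j|) := by
  simpa only [Finset.sum_add_distrib, ← Finset.mul_sum] using
    Finset.sum_le_sum fun j (_ : j ∈ Finset.univ) =>
      abs_sub_mul_sum_abs_le_boosts_add ht hcone (b j) (d j)

theorem abs_sub_mul_hessian_le (ht : 0 < t) (hcone : √(∑ i, x i ^ 2) ≤ κ * t) (a : ℝ) (b : ι → ℝ)
    (d : ι → ι → ℝ) :
    |t - √(∑ i, x i ^ 2)| * (|a| + 2 * ∑ j, |b j| + ∑ j, ∑ i, |d j i|) ≤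
      (2 + (Fintype.card ι + 1) * κ) ^ 2 * (t * |a - ∑ i, d i i| + ∑ i, |x i * a + t * b i| +
        ∑ j, ∑ i, |x i * b j + t * d j i|) := by
  set s := |t - √(∑ i, x i ^ 2)|
  set A := ∑ i, |x i * a + t * b i|
  set D := ∑ j, ∑ i, |x i * b j + t * d j i|
  set K := t * |a - ∑ i, d i i| + A + D
  have hκ : 0 ≤ κ := nonneg_of_mul_nonneg_left ((Real.sqrt_nonneg _).trans hcone) ht
  have hAK : A ≤ K := by
    rw [show K = A + (t * |a - ∑ i, d i i| + D) by ring]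
    exact le_add_of_nonneg_right (by positivity)
  have hDK : D ≤ K := le_add_of_nonneg_left (by positivity)
  have ha : s * |a| ≤ K := abs_sub_mul_abs_le_wave_add_boosts ht a x b d
  set μ := 1 + (Fintype.card ι + 1) * κ
  have hμ : 1 ≤ μ := le_add_of_nonneg_right (by positivity)
  have hb : s * ∑ j, |b j| ≤ μ * K :=
    calc s * ∑ j, |b j| ≤ (1 + κ) * A + Fintype.card ι * κ * (s * |a|) :=
          abs_sub_mul_sum_abs_le_boosts_add ht hcone a b
      _ ≤ (1 + κ) * K + Fintype.card ι * κ * K := by gcongr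
      _ = μ * K := by ring
  have hd : s * ∑ j, ∑ i, |d j i| ≤ μ ^ 2 * K :=
    calc s * ∑ j, ∑ i, |d j i| ≤ (1 + κ) * D + Fintype.card ι * κ * (s * ∑ j, |b j|) :=
          abs_sub_mul_sum_sum_abs_le_boosts_add ht hcone b d
      _ ≤ (1 + κ) * (μ * K) + Fintype.card ι * κ * (μ * K) := by
          gcongr
          exact hDK.trans (le_mul_of_one_le_left (by positivity) hμ)
      _ = μ ^ 2 * K := by ring
  calc s * (|a| + 2 * ∑ j, |b j| + ∑ j, ∑ i, |d j i|)
      = s * |a| + 2 * (s * ∑ j, |b j|) + s * ∑ j, ∑ i, |d j i| := by ring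
    _ ≤ K + 2 * (μ * K) + μ ^ 2 * K := by gcongr
    _ = (2 + (Fintype.card ι + 1) * κ) ^ 2 * K := by ring

end HessianAlgebra

theorem jap_pos (s : ℝ) : 0 < jap s :=
  Real.sqrt_pos.2 (by positivity)

theorem jap_le_one_add_abs (s : ℝ) : jap s ≤ 1 + |s| := by
  simpa [jap] using sqrt_one_add_norm_sq_le s

theorem sum1_nonneg (u : ℝ → ℝ → ℝ → ℝ) (t x y : ℝ) : 0 ≤ sum1 u t x y := by
  unfold sum1
  positivity

section Hessian

variable {φ : ℝ → ℝ → ℝ → ℝ} {t x y κ G : ℝ}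

theorem boosted_hessian_le (hφ : ContDiffAt ℝ 2 ↿φ (t, x, y)) :
    |x * pdt (pdt φ) t x y + t * pd1 (pdt φ) t x y|
      + |y * pdt (pdt φ) t x y + t * pd2 (pdt φ) t x y|
      + (|x * pd1 (pdt φ) t x y + t * pd1 (pd1 φ) t x y|
        + |y * pd1 (pdt φ) t x y + t * pd1 (pd2 φ) t x y|
        + (|x * pd2 (pdt φ) t x y + t * pd2 (pd1 φ) t x y|
          + |y * pd2 (pdt φ) t x y + t * pd2 (pd2 φ) t x y|)) ≤
      sum1 (Lb1 φ) t x y + sum1 (Lb2 φ) t x y + 2 * sum1 φ t x y := by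
  rw [← pdt_pd1_comm hφ, ← pdt_pd2_comm hφ, ← sub_eq_of_eq_add' (pdt_Lb1 hφ),
    ← sub_eq_of_eq_add' (pdt_Lb2 hφ), pdt_pd1_comm hφ, pdt_pd2_comm hφ,
    ← sub_eq_of_eq_add' (pd1_Lb1 hφ), ← pd2_Lb1 hφ, ← pd1_Lb2 hφ, ← sub_eq_of_eq_add' (pd2_Lb2 hφ)]
  unfold sum1
  linarith [abs_sub (pdt (Lb1 φ) t x y) (pd1 φ t x y), abs_sub (pdt (Lb2 φ) t x y) (pd2 φ t x y),
    abs_sub (pd1 (Lb1 φ) t x y) (pdt φ t x y), abs_sub (pd2 (Lb2 φ) t x y) (pdt φ t x y),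
    abs_nonneg (pd1 φ t x y), abs_nonneg (pd2 φ t x y)]

theorem abs_sub_mul_sum1_le (hφ : ContDiffAt ℝ 2 ↿φ (t, x, y))
    (hwave : pdt (pdt φ) t x y - pd1 (pd1 φ) t x y - pd2 (pd2 φ) t x y = G) (ht : 0 < t)
    (hcone : √(x ^ 2 + y ^ 2) ≤ κ * t) :
    |t - √(x ^ 2 + y ^ 2)| * (sum1 (pdt φ) t x y + sum1 (pd1 φ) t x y + sum1 (pd2 φ) t x y) ≤
      (2 + 3 * κ) ^ 2 * (sum1 (Lb1 φ) t x y + sum1 (Lb2 φ) t x y + 2 * sum1 φ t x y + t * |G|) := by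
  have hmain := abs_sub_mul_hessian_le (x := ![x, y]) ht (by simpa using hcone) (pdt (pdt φ) t x y)
    ![pd1 (pdt φ) t x y, pd2 (pdt φ) t x y]
    ![![pd1 (pd1 φ) t x y, pd1 (pd2 φ) t x y], ![pd2 (pd1 φ) t x y, pd2 (pd2 φ) t x y]]
  simp only [Fin.sum_univ_two, Matrix.cons_val_zero, Matrix.cons_val_one, Fintype.card_fin,
    ← sub_sub, hwave] at hmain
  have hHessian : sum1 (pdt φ) t x y + sum1 (pd1 φ) t x y + sum1 (pd2 φ) t x y =
      |pdt (pdt φ) t x y| + 2 * (|pd1 (pdt φ) t x y| + |pd2 (pdt φ) t x y|) +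
        (|pd1 (pd1 φ) t x y| + |pd1 (pd2 φ) t x y| +
          (|pd2 (pd1 φ) t x y| + |pd2 (pd2 φ) t x y|)) := by
    unfold sum1
    rw [pdt_pd1_comm hφ, pdt_pd2_comm hφ]
    ring
  have hconst : 2 + (((2 : ℕ) : ℝ) + 1) * κ = 2 + 3 * κ := by norm_num
  rw [hHessian, ← hconst]
  refine hmain.trans (mul_le_mul_of_nonneg_left ?_ (sq_nonneg _))
  linarith [boosted_hessian_le hφ]

theorem stmt10_general (hφ : ContDiffAt ℝ 2 ↿φ (t, x, y))
    (hwave : pdt (pdt φ) t x y - pd1 (pd1 φ) t x y - pd2 (pd2 φ) t x y = G) (ht : 0 < t)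
    (hcone : √(x ^ 2 + y ^ 2) ≤ κ * t) :
    sum1 (pdt φ) t x y + sum1 (pd1 φ) t x y + sum1 (pd2 φ) t x y ≤ 2 * (2 + 3 * κ) ^ 2 *
      ((1 / jap (t - √(x ^ 2 + y ^ 2))) *
          (sum1 (pdt φ) t x y + sum1 (pd1 φ) t x y + sum1 (pd2 φ) t x y
            + sum1 (rotOp φ) t x y + sum1 (Lb1 φ) t x y + sum1 (Lb2 φ) t x y)
        + (1 / jap (t - √(x ^ 2 + y ^ 2))) * sum1 φ t x y
        + (t / jap (t - √(x ^ 2 + y ^ 2))) * |G|) := by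
  set s := t - √(x ^ 2 + y ^ 2)
  set S := sum1 (pdt φ) t x y + sum1 (pd1 φ) t x y + sum1 (pd2 φ) t x y
  set N := S + sum1 (rotOp φ) t x y + sum1 (Lb1 φ) t x y + sum1 (Lb2 φ) t x y with hN
  set c := (2 + 3 * κ) ^ 2
  have hκ : 0 ≤ κ := nonneg_of_mul_nonneg_left ((Real.sqrt_nonneg _).trans hcone) ht
  have hc : 1 ≤ c := one_le_pow₀ (by linarith)
  have hS : 0 ≤ S := add_nonneg (add_nonneg (sum1_nonneg ..) (sum1_nonneg ..)) (sum1_nonneg ..)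
  have hRHS : 2 * c * (1 / jap s * N + 1 / jap s * sum1 φ t x y + t / jap s * |G|) =
      2 * c * (N + sum1 φ t x y + t * |G|) / jap s := by ring
  rw [hRHS, le_div_iff₀ (jap_pos s)]
  calc S * jap s ≤ S * (1 + |s|) := by gcongr; exact jap_le_one_add_abs s
    _ = S + |s| * S := by ring
    _ ≤ c * S + c * (sum1 (Lb1 φ) t x y + sum1 (Lb2 φ) t x y + 2 * sum1 φ t x y + t * |G|) :=
        add_le_add (le_mul_of_one_le_left hS hc) (abs_sub_mul_sum1_le hφ hwave ht hcone)
    _ = c * (S + sum1 (Lb1 φ) t x y + sum1 (Lb2 φ) t x y + 2 * sum1 φ t x y + t * |G|) := by ring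
    _ ≤ c * (2 * (N + sum1 φ t x y + t * |G|)) := by
        gcongr
        linarith [hN, sum1_nonneg (rotOp φ) t x y, sum1_nonneg (Lb1 φ) t x y,
          sum1_nonneg (Lb2 φ) t x y, mul_nonneg ht.le (abs_nonneg G)]
    _ = 2 * c * (N + sum1 φ t x y + t * |G|) := by ring

end Hessian

/-- Wave equation pointwise estimate: if `-□φ = F` on ℝ^{1+2}, then for `t > 0`, `|x| ≤ 3t`,
`Σ|∂∂φ| ≤ C ( ⟨t-|x|⟩⁻¹ Σ_Γ |∂Γφ| + ⟨t-|x|⟩⁻¹ |∂φ| + (t/⟨t-|x|⟩) |F| )`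
with `Γ ∈ {∂_t, ∂₁, ∂₂, Ω, L₁, L₂}`. -/
theorem stmt10 :
    ∃ C : ℝ, 0 < C ∧
      ∀ (φ F : ℝ → ℝ → ℝ → ℝ),
        ContDiff ℝ (⊤ : ℕ∞) (fun p : ℝ × ℝ × ℝ => φ p.1 p.2.1 p.2.2) →
        (∀ t x y : ℝ,
          pdt (pdt φ) t x y - pd1 (pd1 φ) t x y - pd2 (pd2 φ) t x y = F t x y) →
        ∀ t x y : ℝ, 0 < t → Real.sqrt (x ^ 2 + y ^ 2) ≤ 3 * t →
          sum1 (pdt φ) t x y + sum1 (pd1 φ) t x y + sum1 (pd2 φ) t x y ≤ C *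
            ((1 / jap (t - Real.sqrt (x ^ 2 + y ^ 2))) *
                (sum1 (pdt φ) t x y + sum1 (pd1 φ) t x y + sum1 (pd2 φ) t x y
                  + sum1 (rotOp φ) t x y + sum1 (Lb1 φ) t x y + sum1 (Lb2 φ) t x y)
              + (1 / jap (t - Real.sqrt (x ^ 2 + y ^ 2))) * sum1 φ t x y
              + (t / jap (t - Real.sqrt (x ^ 2 + y ^ 2))) * |F t x y|) := by
  refine ⟨2 * (2 + 3 * 3) ^ 2, by norm_num, fun φ F hφ hwave t x y ht hcone => ?_⟩
  exact stmt10_general (contDiff_infty.1 hφ 2).contDiffAt (hwave t x y) ht hcone
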